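/- arXiv:q-alg/9605021 — 2 statements merged into one kernel-verified Lean document; each statement's English description precedes it below -/
import Mathlib

section
/- Let B ⊆ U_n be the unital ℚ-subalgebra generated by the bosonic elements σ_{ab} := σ_a σ_b + σ_b σ_a (1 ≤ a, b ≤ 2n). Then the ℚ-linear map B ⊗_ℚ Ω → U_n induced by multiplication, b ⊗ ω ↦ b·ω, is a linear isomorphism of ℚ-vector spaces. (This expresses the decomposition U(osp(1|2n)) = U(sp(2n)) ⊗ Ω.) -/
open scoped BigOperators TensorProduct
open Nat

noncomputable section

/-- The symplectic metric `g` of `osp(1|2n)` (0-indexed). -/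
def gmat (n : ℕ) (a b : Fin (2*n)) : ℚ :=
  if (a:ℕ) < n ∧ (b:ℕ) = (a:ℕ) + n then -1
  else if (b:ℕ) < n ∧ (a:ℕ) = (b:ℕ) + n then 1
  else 0

/-- The defining relations of `U(osp(1|2n))`:
`(σₐσ_b + σ_bσₐ)σ_c - σ_c(σₐσ_b + σ_bσₐ) = -g_{ac} σ_b - g_{bc} σₐ`. -/
inductive OspRel (n : ℕ) : FreeAlgebra ℚ (Fin (2*n)) → FreeAlgebra ℚ (Fin (2*n)) → Prop
  | rel (a b c : Fin (2*n)) : OspRel n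
      ((FreeAlgebra.ι ℚ a * FreeAlgebra.ι ℚ b + FreeAlgebra.ι ℚ b * FreeAlgebra.ι ℚ a)
          * FreeAlgebra.ι ℚ c)
      (FreeAlgebra.ι ℚ c *
          (FreeAlgebra.ι ℚ a * FreeAlgebra.ι ℚ b + FreeAlgebra.ι ℚ b * FreeAlgebra.ι ℚ a)
        - algebraMap ℚ (FreeAlgebra ℚ (Fin (2*n))) (gmat n a c) * FreeAlgebra.ι ℚ b
        - algebraMap ℚ (FreeAlgebra ℚ (Fin (2*n))) (gmat n b c) * FreeAlgebra.ι ℚ a)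

/-- The universal enveloping superalgebra `U(osp(1|2n))`. -/
abbrev U (n : ℕ) := RingQuot (OspRel n)

/-- The fermionic generators `σₐ`. -/
def σ (n : ℕ) (a : Fin (2*n)) : U n :=
  RingQuot.mkAlgHom ℚ (OspRel n) (FreeAlgebra.ι ℚ a)

/-- The bosonic generators `σ_{ab} = σₐσ_b + σ_bσₐ`. -/
def σσ (n : ℕ) (a b : Fin (2*n)) : U n := σ n a * σ n b + σ n b * σ n a

/-- The antisymmetrized monomial `[a₁ … a_p]`. -/
def brkt (n : ℕ) (p : ℕ) (a : Fin p → Fin (2*n)) : U n :=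
  ∑ s : Equiv.Perm (Fin p),
    (Equiv.Perm.sign s : ℤ) • (List.ofFn fun i => σ n (a (s i))).prod

/-- `Ω`, the span of all the antisymmetrized monomials. -/
def Omega (n : ℕ) : Submodule ℚ (U n) :=
  Submodule.span ℚ {x | ∃ p, ∃ a : Fin p → Fin (2*n), x = brkt n p a}


/-- `B`, the unital subalgebra generated by the bosonic elements `σ_{ab}`. -/
def Bos (n : ℕ) : Subalgebra ℚ (U n) :=
  Algebra.adjoin ℚ {x | ∃ a b, x = σσ n a b}

/-- The multiplication map `B ⊗[ℚ] Ω → U n`, `b ⊗ ω ↦ b·ω`. -/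
def mulMap (n : ℕ) : (Bos n ⊗[ℚ] Omega n) →ₗ[ℚ] U n :=
  TensorProduct.lift
    (((LinearMap.mul ℚ (U n)).comp (Bos n).val.toLinearMap).compl₂ (Omega n).subtype)


section SuperspaceOperators

variable {A ι : Type*} [Ring A] [Algebra ℚ A] [Fintype ι] [DecidableEq ι]

/-- Operators `θ`, `∂` satisfying the canonical anticommutation relations, together with
commuting elements `s` that satisfy the relations of `sp(g)`. -/
structure IsSuperspace (g : ι → ι → ℚ) (θ D : ι → A) (s : ι → ι → A) : Prop where
  theta_theta : ∀ a b, θ a * θ b = -(θ b * θ a)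
  D_D : ∀ a b, D a * D b = -(D b * D a)
  D_theta : ∀ a b, D a * θ b = (if a = b then 1 else 0) - θ b * D a
  s_theta : ∀ a b c, s a b * θ c = θ c * s a b
  s_D : ∀ a b c, s a b * D c = D c * s a b
  s_symm : ∀ a b, s a b = s b a
  s_s : ∀ a b c d, s a b * s c d = s c d * s a b - g a c • s b d - g b c • s a d
    - g a d • s b c - g b d • s a c
  antisymm : ∀ a b, g a b = - g b a

/-- The coordinate with lowered index. -/
def lowered (g : ι → ι → ℚ) (θ : ι → A) (a : ι) : A := ∑ b, g a b • θ b

/-- The invariant quadratic form in the coordinates. -/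
def quadForm (g : ι → ι → ℚ) (θ : ι → A) : A := ∑ b, θ b * lowered g θ b

/-- The Euler operator. -/
def euler (θ D : ι → A) : A := ∑ b, θ b * D b

/-- The connection term of the covariant vector fields. -/
def connection (θ : ι → A) (s : ι → ι → A) (a : ι) : A := ∑ b, θ b * s a b

/-- The odd vector fields on the coset superspace `OSp(1|2n)/Sp(2n)`, in stereographic
coordinates. -/
def oddField (g : ι → ι → ℚ) (θ D : ι → A) (s : ι → ι → A) (a : ι) : A :=
  D a + (1 / 4 : ℚ) • (quadForm g θ * D a) - (1 / 2 : ℚ) • (lowered g θ a * euler θ D)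
    + (1 / 2 : ℚ) • connection θ s a

/-- The even vector fields on the coset superspace `OSp(1|2n)/Sp(2n)`. -/
def evenField (g : ι → ι → ℚ) (θ D : ι → A) (s : ι → ι → A) (a b : ι) : A :=
  lowered g θ a * D b + lowered g θ b * D a + s a b

namespace IsSuperspace

variable {g : ι → ι → ℚ} {θ D : ι → A} {s : ι → ι → A} (h : IsSuperspace g θ D s)
include h

lemma theta_lowered (a b : ι) : θ a * lowered g θ b = -(lowered g θ b * θ a) := by
  simp only [lowered, Finset.mul_sum, Finset.sum_mul, mul_smul_comm, smul_mul_assoc,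
    ← Finset.sum_neg_distrib, ← smul_neg, ← h.theta_theta]

lemma lowered_lowered (a b : ι) :
    lowered g θ a * lowered g θ b = -(lowered g θ b * lowered g θ a) := by
  rw [lowered, Finset.sum_mul, Finset.mul_sum, ← Finset.sum_neg_distrib]
  simp only [mul_smul_comm, smul_mul_assoc, h.theta_lowered, smul_neg]

lemma D_lowered (a b : ι) : D a * lowered g θ b = algebraMap ℚ A (g b a) - lowered g θ b * D a := by
  simp only [lowered, Finset.mul_sum, Finset.sum_mul, mul_smul_comm, smul_mul_assoc, h.D_theta,
    smul_sub, Finset.sum_sub_distrib]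
  simp [Algebra.algebraMap_eq_smul_one]

lemma quadForm_theta (a : ι) : quadForm g θ * θ a = θ a * quadForm g θ := by
  simp only [quadForm, Finset.mul_sum, Finset.sum_mul]
  refine Finset.sum_congr rfl fun b _ => ?_
  rw [← mul_assoc, h.theta_theta a b, mul_assoc, ← neg_eq_iff_eq_neg.mpr (h.theta_lowered a b)]
  noncomm_ring

lemma quadForm_lowered (a : ι) : quadForm g θ * lowered g θ a = lowered g θ a * quadForm g θ := by
  simp only [lowered, Finset.mul_sum, Finset.sum_mul, mul_smul_comm, smul_mul_assoc,
    h.quadForm_theta]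

lemma sum_smul_theta (a : ι) : ∑ b, g b a • θ b = -lowered g θ a := by
  simp only [lowered, ← Finset.sum_neg_distrib, ← neg_smul]
  exact Finset.sum_congr rfl fun b _ => by rw [h.antisymm b a]

lemma D_quadForm (a : ι) : D a * quadForm g θ = quadForm g θ * D a + (2 : ℚ) • lowered g θ a := by
  have key : ∀ b, D a * (θ b * lowered g θ b) = θ b * lowered g θ b * D a
      + ((if a = b then lowered g θ b else 0) - g b a • θ b) := fun b => by
    rw [← mul_assoc, h.D_theta, sub_mul, mul_assoc, h.D_lowered, mul_sub, ← Algebra.commutes,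
      ← Algebra.smul_def, mul_assoc]
    split_ifs <;> noncomm_ring
  simp only [quadForm, Finset.mul_sum, key, Finset.sum_add_distrib, Finset.sum_sub_distrib,
    h.sum_smul_theta, Finset.sum_mul]
  simp [two_smul]

lemma euler_theta (a : ι) : euler θ D * θ a = θ a * euler θ D + θ a := by
  have key : ∀ b, θ b * D b * θ a = θ a * (θ b * D b) + (if b = a then θ b else 0) := fun b => by
    rw [mul_assoc, h.D_theta, mul_sub, ← mul_assoc, h.theta_theta b a]
    split_ifs <;> noncomm_ring
  simp only [euler, Finset.sum_mul, key, Finset.sum_add_distrib, Finset.mul_sum]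
  simp

lemma euler_lowered (a : ι) :
    euler θ D * lowered g θ a = lowered g θ a * euler θ D + lowered g θ a := by
  simp only [lowered, Finset.mul_sum, Finset.sum_mul, mul_smul_comm, smul_mul_assoc,
    h.euler_theta, smul_add, Finset.sum_add_distrib]

lemma euler_quadForm :
    euler θ D * quadForm g θ = quadForm g θ * euler θ D + (2 : ℚ) • quadForm g θ := by
  simp only [quadForm, Finset.mul_sum, Finset.sum_mul, Finset.smul_sum, ← Finset.sum_add_distrib]
  refine Finset.sum_congr rfl fun b _ => ?_
  rw [← mul_assoc, h.euler_theta, add_mul, mul_assoc, h.euler_lowered, two_smul]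
  noncomm_ring

lemma D_euler (a : ι) : D a * euler θ D = euler θ D * D a + D a := by
  have key : ∀ b, D a * (θ b * D b) = θ b * D b * D a + (if a = b then D b else 0) := fun b => by
    rw [← mul_assoc, h.D_theta, sub_mul, mul_assoc, h.D_D a b]
    split_ifs <;> noncomm_ring
  simp only [euler, Finset.mul_sum, key, Finset.sum_add_distrib, Finset.sum_mul]
  simp

lemma connection_theta (a b : ι) : connection θ s a * θ b = -(θ b * connection θ s a) := by
  simp only [connection, Finset.mul_sum, Finset.sum_mul, ← Finset.sum_neg_distrib]
  refine Finset.sum_congr rfl fun c _ => ?_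
  rw [mul_assoc, h.s_theta, ← mul_assoc, h.theta_theta, neg_mul, mul_assoc]

lemma connection_lowered (a b : ι) :
    connection θ s a * lowered g θ b = -(lowered g θ b * connection θ s a) := by
  simp only [lowered, Finset.mul_sum, Finset.sum_mul, mul_smul_comm, smul_mul_assoc,
    h.connection_theta, smul_neg, Finset.sum_neg_distrib]

lemma s_lowered (a b c : ι) : s a b * lowered g θ c = lowered g θ c * s a b := by
  simp only [lowered, Finset.mul_sum, Finset.sum_mul, mul_smul_comm, smul_mul_assoc, h.s_theta]

lemma s_quadForm (a b : ι) : s a b * quadForm g θ = quadForm g θ * s a b := by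
  simp only [quadForm, Finset.mul_sum, Finset.sum_mul]
  refine Finset.sum_congr rfl fun c _ => ?_
  rw [← mul_assoc, h.s_theta, mul_assoc, h.s_lowered, mul_assoc]

lemma s_euler (a b : ι) : s a b * euler θ D = euler θ D * s a b := by
  simp only [euler, Finset.mul_sum, Finset.sum_mul]
  refine Finset.sum_congr rfl fun c _ => ?_
  rw [← mul_assoc, h.s_theta, mul_assoc, h.s_D, mul_assoc]

lemma connection_quadForm (a : ι) :
    connection θ s a * quadForm g θ = quadForm g θ * connection θ s a := by
  simp only [connection, Finset.mul_sum, Finset.sum_mul]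
  refine Finset.sum_congr rfl fun c _ => ?_
  rw [mul_assoc, h.s_quadForm, ← mul_assoc, ← h.quadForm_theta, mul_assoc]

lemma euler_connection (a : ι) :
    euler θ D * connection θ s a = connection θ s a * euler θ D + connection θ s a := by
  simp only [connection, Finset.mul_sum, Finset.sum_mul, ← Finset.sum_add_distrib]
  refine Finset.sum_congr rfl fun c _ => ?_
  rw [← mul_assoc, h.euler_theta, add_mul, mul_assoc, ← h.s_euler, mul_assoc]

lemma D_connection (a b : ι) : D a * connection θ s b = s b a - connection θ s b * D a := by
  have key : ∀ c, D a * (θ c * s b c) = (if a = c then s b c else 0) - θ c * s b c * D a :=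
    fun c => by
      rw [← mul_assoc, h.D_theta, sub_mul, mul_assoc, ← h.s_D, mul_assoc]
      split_ifs <;> noncomm_ring
  simp only [connection, Finset.mul_sum, Finset.sum_mul, key, Finset.sum_sub_distrib]
  simp

lemma sum_theta_theta_s : ∑ c, ∑ d, θ c * θ d * s c d = 0 := by
  have hneg : ∑ c, ∑ d, θ c * θ d * s c d = -∑ c, ∑ d, θ c * θ d * s c d := by
    conv_lhs => rw [Finset.sum_comm]
    simp only [← Finset.sum_neg_distrib]
    refine Finset.sum_congr rfl fun c _ => Finset.sum_congr rfl fun d _ => ?_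
    rw [h.theta_theta, h.s_symm, neg_mul]
  have h2 : (2 : ℚ) • ∑ c, ∑ d, θ c * θ d * s c d = 0 := by
    rw [two_smul]; nth_rewrite 2 [hneg]; exact add_neg_cancel _
  simpa using h2

lemma connection_connection (a b : ι) :
    connection θ s a * connection θ s b = -(connection θ s b * connection θ s a)
      + lowered g θ a * connection θ s b + lowered g θ b * connection θ s a
      - quadForm g θ * s a b := by
  have key : ∀ c d, θ c * s a c * (θ d * s b d) = -(θ d * s b d * (θ c * s a c))
      - g a b • (θ c * θ d * s c d) - (g c b • θ c) * (θ d * s a d)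
      + (g a d • θ d) * (θ c * s b c) - (θ c * (g c d • θ d)) * s a b := fun c d => by
    have e1 : θ c * s a c * (θ d * s b d) = θ c * θ d * (s a c * s b d) := by
      rw [mul_assoc, ← mul_assoc (s a c), h.s_theta]; noncomm_ring
    have e2 : θ d * s b d * (θ c * s a c) = -(θ c * θ d * (s b d * s a c)) := by
      rw [mul_assoc, ← mul_assoc (s b d), h.s_theta, h.theta_theta c d]
      have := h.theta_theta d c
      noncomm_ring
    have e3 : θ d * (θ c * s b c) = -(θ c * θ d * s b c) := by
      rw [← mul_assoc, h.theta_theta, neg_mul]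
    rw [e1, e2, smul_mul_assoc, smul_mul_assoc, e3, h.s_s, h.s_symm c b]
    simp only [mul_sub, mul_smul_comm, smul_mul_assoc, mul_assoc]
    module
  have eL : connection θ s a * connection θ s b = ∑ c, ∑ d, θ c * s a c * (θ d * s b d) := by
    simp only [connection, Finset.sum_mul_sum]
  have eR : connection θ s b * connection θ s a = ∑ c, ∑ d, θ d * s b d * (θ c * s a c) := by
    simp only [connection, Finset.sum_mul_sum]
    exact Finset.sum_comm
  have e1 : ∑ c, ∑ d, (g c b • θ c) * (θ d * s a d) = -(lowered g θ b * connection θ s a) := by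
    rw [← Finset.sum_mul_sum, h.sum_smul_theta, neg_mul, connection]
  have e2 : ∑ c, ∑ d, (g a d • θ d) * (θ c * s b c) = lowered g θ a * connection θ s b := by
    rw [Finset.sum_comm, ← Finset.sum_mul_sum, connection, lowered]
  have e3 : ∑ c, ∑ d, (θ c * (g c d • θ d)) * s a b = quadForm g θ * s a b := by
    simp only [← Finset.sum_mul, ← Finset.mul_sum, quadForm, lowered]
  rw [eL, eR, ← e2, ← e3, ← neg_eq_iff_eq_neg.mpr e1]
  simp only [key, Finset.sum_add_distrib, Finset.sum_sub_distrib, Finset.sum_neg_distrib,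
    ← Finset.smul_sum, h.sum_theta_theta_s]
  simp only [smul_zero, sub_zero]
  abel

lemma oddField_anticomm (a b : ι) :
    oddField g θ D s a * oddField g θ D s b + oddField g θ D s b * oddField g θ D s a
      = evenField g θ D s a b := by
  have hg : algebraMap ℚ A (g b a) = - algebraMap ℚ A (g a b) := by
    rw [h.antisymm b a, map_neg]
  have p1 := h.D_D a b
  have p2 : ∀ a b, D a * (quadForm g θ * D b) = quadForm g θ * D a * D b
      + (2 : ℚ) • (lowered g θ a * D b) := fun a b => by
    rw [← mul_assoc, h.D_quadForm, add_mul, smul_mul_assoc]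
  have p3 : ∀ a b, D a * (lowered g θ b * euler θ D) = algebraMap ℚ A (g b a) * euler θ D
      - lowered g θ b * euler θ D * D a - lowered g θ b * D a := fun a b => by
    rw [← mul_assoc, h.D_lowered, sub_mul, mul_assoc _ (D a), h.D_euler]; noncomm_ring
  have p4 : ∀ a b, quadForm g θ * D a * (quadForm g θ * D b)
      = quadForm g θ * (quadForm g θ * D a * D b)
      + (2 : ℚ) • (quadForm g θ * (lowered g θ a * D b)) := fun a b => by
    rw [mul_assoc, p2, mul_add, mul_smul_comm]
  have p5 : ∀ a b, quadForm g θ * D a * (lowered g θ b * euler θ D)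
      = quadForm g θ * (algebraMap ℚ A (g b a) * euler θ D)
      - quadForm g θ * (lowered g θ b * euler θ D * D a)
      - quadForm g θ * (lowered g θ b * D a) := fun a b => by
    rw [mul_assoc, p3, mul_sub, mul_sub]
  have p6 : ∀ a b, lowered g θ b * euler θ D * (quadForm g θ * D a)
      = quadForm g θ * (lowered g θ b * euler θ D * D a)
      + (2 : ℚ) • (quadForm g θ * (lowered g θ b * D a)) := fun a b => by
    rw [mul_assoc, ← mul_assoc (euler θ D), h.euler_quadForm, add_mul, mul_add, mul_assoc _ _ (D a),
      ← mul_assoc _ _ (euler θ D * D a), ← h.quadForm_lowered, smul_mul_assoc, mul_smul_comm,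
      ← mul_assoc _ (quadForm g θ) (D a), ← h.quadForm_lowered]
    simp only [mul_assoc]
  have p7 : ∀ a b, lowered g θ a * euler θ D * (lowered g θ b * euler θ D)
      = lowered g θ a * lowered g θ b * (euler θ D * euler θ D)
        + lowered g θ a * lowered g θ b * euler θ D := fun a b => by
    rw [mul_assoc, ← mul_assoc (euler θ D), h.euler_lowered]; noncomm_ring
  have p8 := h.lowered_lowered a b
  have p9 : ∀ a b, lowered g θ a * euler θ D * connection θ s b
      = lowered g θ a * (connection θ s b * euler θ D)
        + lowered g θ a * connection θ s b := fun a b => by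
    rw [mul_assoc, h.euler_connection, mul_add]
  have p10 : ∀ a b, connection θ s b * (lowered g θ a * euler θ D)
      = -(lowered g θ a * (connection θ s b * euler θ D)) := fun a b => by
    rw [← mul_assoc, h.connection_lowered]; noncomm_ring
  have p11 : ∀ a b, quadForm g θ * D a * connection θ s b
      = quadForm g θ * s b a - quadForm g θ * (connection θ s b * D a) := fun a b => by
    rw [mul_assoc, h.D_connection, mul_sub]
  have p12 : ∀ a b, connection θ s b * (quadForm g θ * D a)
      = quadForm g θ * (connection θ s b * D a) := fun a b => by
    rw [← mul_assoc, h.connection_quadForm, mul_assoc]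
  have p13 : quadForm g θ * D a * D b = -(quadForm g θ * D b * D a) := by
    rw [mul_assoc, h.D_D, mul_neg, mul_assoc]
  simp only [oddField, evenField, mul_add, add_mul, mul_sub, sub_mul, smul_mul_assoc,
    mul_smul_comm, smul_add, smul_sub, p2, p3, p4, p5, p6, p7, p9, p10, p11, p12,
    h.D_connection, p1, p13, p8, hg, h.s_symm b a, h.connection_connection a b,
    neg_mul, mul_neg, smul_neg]
  module

lemma lowered_mul_D_lowered (a b c : ι) : lowered g θ a * D b * lowered g θ c
    = lowered g θ c * (lowered g θ a * D b) - g b c • lowered g θ a := by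
  rw [mul_assoc, h.D_lowered, mul_sub, ← mul_assoc, h.lowered_lowered a c, ← Algebra.commutes,
    ← Algebra.smul_def, h.antisymm c b, neg_mul, mul_assoc]
  module

lemma lowered_mul_D_D (a b c : ι) : lowered g θ a * D b * D c
    = D c * (lowered g θ a * D b) - g a c • D b := by
  rw [← mul_assoc (D c), h.D_lowered, sub_mul, mul_assoc _ (D c), h.D_D c b, mul_assoc,
    ← Algebra.smul_def]
  simp

lemma lowered_mul_D_theta (a b c : ι) : lowered g θ a * D b * θ c
    = θ c * (lowered g θ a * D b) + if b = c then lowered g θ a else 0 := by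
  rw [mul_assoc, h.D_theta, mul_sub, ← mul_assoc, ← mul_assoc, h.theta_lowered c a]
  split_ifs <;> noncomm_ring

lemma evenField_theta (a b c : ι) : evenField g θ D s a b * θ c = θ c * evenField g θ D s a b
    + ((if b = c then lowered g θ a else 0) + (if a = c then lowered g θ b else 0)) := by
  simp only [evenField, add_mul, mul_add, h.lowered_mul_D_theta, h.s_theta]
  abel

lemma evenField_lowered (a b c : ι) : evenField g θ D s a b * lowered g θ c
    = lowered g θ c * evenField g θ D s a b - g a c • lowered g θ b - g b c • lowered g θ a := by
  simp only [evenField, add_mul, mul_add, h.lowered_mul_D_lowered, h.s_lowered]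
  abel

lemma evenField_D (a b c : ι) : evenField g θ D s a b * D c
    = D c * evenField g θ D s a b - g a c • D b - g b c • D a := by
  simp only [evenField, add_mul, mul_add, h.lowered_mul_D_D, h.s_D]
  abel

lemma evenField_quadForm (a b : ι) : evenField g θ D s a b * quadForm g θ
    = quadForm g θ * evenField g θ D s a b := by
  have key : ∀ c, evenField g θ D s a b * (θ c * lowered g θ c)
      = θ c * lowered g θ c * evenField g θ D s a b
        - (g a c • θ c) * lowered g θ b - (g b c • θ c) * lowered g θ a
        + ((if b = c then lowered g θ a * lowered g θ c else 0)
          + (if a = c then lowered g θ b * lowered g θ c else 0)) := fun c => by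
    rw [← mul_assoc, h.evenField_theta, add_mul, mul_assoc, h.evenField_lowered]
    simp only [mul_sub, mul_smul_comm, smul_mul_assoc, mul_assoc]
    split_ifs <;> simp only [add_mul, zero_mul, add_zero, zero_add]
  have e : ∀ a, ∑ c, g a c • θ c = lowered g θ a := fun _ => rfl
  simp only [quadForm, Finset.mul_sum, key, Finset.sum_add_distrib, Finset.sum_sub_distrib,
    ← Finset.sum_mul, e, Finset.sum_ite_eq, Finset.mem_univ, if_true]
  abel

lemma evenField_euler (a b : ι) : evenField g θ D s a b * euler θ D
    = euler θ D * evenField g θ D s a b := by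
  have e : ∀ a b, lowered g θ a * D b * euler θ D = euler θ D * (lowered g θ a * D b) :=
    fun a b => by
      rw [mul_assoc, h.D_euler, ← mul_assoc (euler θ D), h.euler_lowered]; noncomm_ring
  simp only [evenField, add_mul, mul_add, e, h.s_euler]

lemma lowered_mul_D_connection (a b c : ι) : lowered g θ a * D b * connection θ s c
    = connection θ s c * (lowered g θ a * D b) + lowered g θ a * s c b := by
  rw [mul_assoc, h.D_connection, ← mul_assoc, h.connection_lowered]
  noncomm_ring

lemma s_connection (a b c : ι) : s a b * connection θ s c = connection θ s c * s a b
    - g a c • connection θ s b - g b c • connection θ s a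
    - lowered g θ a * s b c - lowered g θ b * s a c := by
  have key : ∀ d, s a b * (θ d * s c d) = θ d * s c d * s a b - g a c • (θ d * s b d)
      - g b c • (θ d * s a d) - (g a d • θ d) * s b c - (g b d • θ d) * s a c := fun d => by
    rw [← mul_assoc, h.s_theta, mul_assoc, h.s_s]
    simp only [mul_sub, mul_smul_comm, smul_mul_assoc, mul_assoc]
  simp only [connection, Finset.mul_sum, key, Finset.sum_sub_distrib, ← Finset.sum_mul,
    ← Finset.smul_sum, lowered]

lemma evenField_connection (a b c : ι) : evenField g θ D s a b * connection θ s c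
    = connection θ s c * evenField g θ D s a b - g a c • connection θ s b
      - g b c • connection θ s a := by
  simp only [evenField, add_mul, mul_add, h.lowered_mul_D_connection, h.s_connection,
    h.s_symm c]
  abel

lemma evenField_oddField (a b c : ι) : evenField g θ D s a b * oddField g θ D s c
    = oddField g θ D s c * evenField g θ D s a b - g a c • oddField g θ D s b
      - g b c • oddField g θ D s a := by
  have e1 : evenField g θ D s a b * (quadForm g θ * D c)
      = quadForm g θ * D c * evenField g θ D s a b - g a c • (quadForm g θ * D b)
        - g b c • (quadForm g θ * D a) := by
    rw [← mul_assoc, h.evenField_quadForm, mul_assoc, h.evenField_D]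
    simp only [mul_sub, mul_smul_comm, mul_assoc]
  have e2 : evenField g θ D s a b * (lowered g θ c * euler θ D)
      = lowered g θ c * euler θ D * evenField g θ D s a b - g a c • (lowered g θ b * euler θ D)
        - g b c • (lowered g θ a * euler θ D) := by
    rw [← mul_assoc, h.evenField_lowered, mul_assoc _ (euler θ D), ← h.evenField_euler]
    simp only [sub_mul, smul_mul_assoc, mul_assoc]
  simp only [oddField, mul_add, add_mul, mul_sub, sub_mul, mul_smul_comm, smul_mul_assoc, e1, e2,
    h.evenField_D, h.evenField_connection]
  module

end IsSuperspace
end SuperspaceOperators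

section Words

variable {A ι : Type*} [Ring A] [Algebra ℚ A]

lemma prod_ofFn_swap_succ (X : ι → A) {p : ℕ} (a : Fin (p + 1) → ι) (i : Fin p) :
    ∃ (j k : ℕ) (x y : A), j + k + 1 = p ∧ x ∈ Submodule.span ℚ (Set.range X) ^ j ∧
      y ∈ Submodule.span ℚ (Set.range X) ^ k ∧
      (List.ofFn fun m => X (a m)).prod = x * (X (a i.castSucc) * X (a i.succ)) * y ∧
      (List.ofFn fun m => X (a (Equiv.swap i.castSucc i.succ m))).prod
        = x * (X (a i.succ) * X (a i.castSucc)) * y := by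
  have hX : ∀ b, X b ∈ Submodule.span ℚ (Set.range X) := fun b => Submodule.subset_span ⟨b, rfl⟩
  have hw : ∀ (k : ℕ) (b : Fin k → ι),
      (List.ofFn fun m => X (b m)).prod ∈ Submodule.span ℚ (Set.range X) ^ k := by
    intro k
    induction k with
    | zero => intro b; exact Submodule.mem_one.mpr ⟨1, by simp⟩
    | succ k ih =>
      intro b
      rw [List.ofFn_succ, List.prod_cons, _root_.pow_succ']
      exact Submodule.mul_mem_mul (hX _) (ih _)
  induction p with
  | zero => exact i.elim0
  | succ p ih =>
    refine Fin.cases ?_ (fun i => ?_) i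
    · refine ⟨0, p, 1, (List.ofFn fun m : Fin p => X (a m.succ.succ)).prod, by omega,
        Submodule.mem_one.mpr ⟨1, map_one _⟩, hw _ _, ?_, ?_⟩
      · simp [List.ofFn_succ, mul_assoc]
      · have : ∀ m : Fin p, Equiv.swap (0 : Fin (p + 2)) 1 m.succ.succ = m.succ.succ := fun m =>
          Equiv.swap_apply_of_ne_of_ne (Fin.succ_ne_zero _)
            (fun h => Fin.succ_ne_zero m (Fin.succ_injective _ h))
        simp [List.ofFn_succ, mul_assoc, this]
    · obtain ⟨j, k, x, y, hjk, hx, hy, h1, h2⟩ := ih (fun m => a m.succ) i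
      refine ⟨j + 1, k, X (a 0) * x, y, by omega, ?_, hy, ?_, ?_⟩
      · rw [_root_.pow_succ']
        exact Submodule.mul_mem_mul (hX _) hx
      · rw [List.ofFn_succ, List.prod_cons, h1]
        simp [mul_assoc]
      · have e0 : Equiv.swap i.succ.castSucc i.succ.succ 0 = 0 := by
          rw [← Fin.succ_castSucc]
          exact Equiv.swap_apply_of_ne_of_ne (Fin.succ_ne_zero _).symm (Fin.succ_ne_zero _).symm
        have e : ∀ m : Fin (p + 1), Equiv.swap i.succ.castSucc i.succ.succ m.succ
            = (Equiv.swap i.castSucc i.succ m).succ := fun m => by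
          rw [← Fin.succ_castSucc]
          exact (Fin.succ_injective _).swap_apply _ _ _
        rw [List.ofFn_succ, List.prod_cons, e0]
        simp only [e, h2]
        simp [mul_assoc]

/-- Words which anticommute modulo `P` are alternating modulo `P`. -/
lemma prod_ofFn_perm_sub_mem (X : ι → A) (P : Submodule ℚ A) {p : ℕ}
    (hP : ∀ (j k : ℕ) (x y : A) (b c : ι), j + k + 2 = p →
      x ∈ Submodule.span ℚ (Set.range X) ^ j → y ∈ Submodule.span ℚ (Set.range X) ^ k →
      x * (X b * X c + X c * X b) * y ∈ P)
    (s : Equiv.Perm (Fin p)) (a : Fin p → ι) :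
    (List.ofFn fun m => X (a (s m))).prod
      - (Equiv.Perm.sign s : ℤ) • (List.ofFn fun m => X (a m)).prod ∈ P := by
  cases p with
  | zero => simp [Subsingleton.elim s 1]
  | succ p =>
    have hs : s ∈ Submonoid.closure
        (Set.range fun i : Fin p => Equiv.swap i.castSucc i.succ) := by
      rw [Equiv.Perm.mclosure_swap_castSucc_succ]; trivial
    induction hs using Submonoid.closure_induction generalizing a with
    | mem s hs =>
      obtain ⟨i, rfl⟩ := hs
      obtain ⟨j, k, x, y, hjk, hx, hy, h1, h2⟩ := prod_ofFn_swap_succ X a i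
      have := hP j k x y (a i.castSucc) (a i.succ) (by omega) hx hy
      rw [h1, h2, Equiv.Perm.sign_swap (Fin.castSucc_lt_succ).ne]
      convert this using 1
      simp only [Units.val_neg, Units.val_one, neg_smul, one_smul]
      noncomm_ring
    | one => simp
    | mul s t _ _ hs ht =>
      have e := P.add_mem (ht fun m => a (s m)) (P.smul_of_tower_mem (Equiv.Perm.sign t : ℤ) (hs a))
      convert e using 1
      simp only [Equiv.Perm.sign_mul, Units.val_mul, smul_sub, smul_smul, Equiv.Perm.mul_apply,
        mul_comm (Equiv.Perm.sign s : ℤ)]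
      abel

end Words

section Fock

variable (R ι : Type*) [Ring R] [Algebra ℚ R]

/-- The `R`-valued exterior algebra on the basis `ι`. -/
abbrev Fock := ExteriorAlgebra ℚ (ι → ℚ) ⊗[ℚ] R

variable {ι}

/-- Exterior multiplication by a basis vector. -/
def creation [DecidableEq ι] (a : ι) : Module.End ℚ (Fock R ι) :=
  Module.End.rTensorAlgHom ℚ (ExteriorAlgebra ℚ (ι → ℚ)) R
    (LinearMap.mulLeft ℚ (ExteriorAlgebra.ι ℚ (Pi.single a 1 : ι → ℚ)))

/-- Contraction with a coordinate function. -/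
def annihilation (a : ι) : Module.End ℚ (Fock R ι) :=
  Module.End.rTensorAlgHom ℚ (ExteriorAlgebra ℚ (ι → ℚ)) R
    (CliffordAlgebra.contractLeft (LinearMap.proj a))

variable (ι) in
/-- Left multiplication by coefficients. -/
def coeffMul : R →ₐ[ℚ] Module.End ℚ (Fock R ι) :=
  (Module.End.lTensorAlgHom ℚ R (ExteriorAlgebra ℚ (ι → ℚ))).comp (Algebra.lmul ℚ R)

variable (ι) in
/-- The degree zero component. -/
def constantTerm : Fock R ι →ₗ[ℚ] R :=
  (TensorProduct.lid ℚ R).toLinearMap ∘ₗ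
    (ExteriorAlgebra.algebraMapInv (R := ℚ) (M := ι → ℚ)).toLinearMap.rTensor R

variable {R}

@[simp] lemma creation_tmul [DecidableEq ι] (a : ι) (x : ExteriorAlgebra ℚ (ι → ℚ)) (r : R) :
    creation R a (x ⊗ₜ r) = (ExteriorAlgebra.ι ℚ (Pi.single a 1 : ι → ℚ) * x) ⊗ₜ r := rfl

@[simp] lemma annihilation_tmul (a : ι) (x : ExteriorAlgebra ℚ (ι → ℚ)) (r : R) :
    annihilation R a (x ⊗ₜ r) = (CliffordAlgebra.contractLeft (LinearMap.proj a) x) ⊗ₜ r := rfl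

@[simp] lemma coeffMul_tmul (u : R) (x : ExteriorAlgebra ℚ (ι → ℚ)) (r : R) :
    coeffMul R ι u (x ⊗ₜ r) = x ⊗ₜ (u * r) := rfl

@[simp] lemma constantTerm_tmul (x : ExteriorAlgebra ℚ (ι → ℚ)) (r : R) :
    constantTerm R ι (x ⊗ₜ r) = ExteriorAlgebra.algebraMapInv x • r := rfl

lemma constantTerm_creation [DecidableEq ι] (a : ι) (f : Fock R ι) :
    constantTerm R ι (creation R a f) = 0 := by
  induction f using TensorProduct.induction_on with
  | zero => simp
  | tmul x r => simp [ExteriorAlgebra.algebraMapInv]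
  | add x y hx hy => simp [hx, hy]

lemma constantTerm_coeffMul (u : R) (f : Fock R ι) :
    constantTerm R ι (coeffMul R ι u f) = u * constantTerm R ι f := by
  induction f using TensorProduct.induction_on with
  | zero => simp
  | tmul x r => simp
  | add x y hx hy => simp [hx, hy, mul_add]

lemma isSuperspace_fock [Fintype ι] [DecidableEq ι] {g : ι → ι → ℚ} {s : ι → ι → R}
    (hg : ∀ a b, g a b = - g b a) (hsymm : ∀ a b, s a b = s b a)
    (hss : ∀ a b c d, s a b * s c d = s c d * s a b - g a c • s b d - g b c • s a d
      - g a d • s b c - g b d • s a c) :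
    IsSuperspace g (creation R) (annihilation R) (fun a b => coeffMul R ι (s a b)) where
  theta_theta a b := by
    refine TensorProduct.ext' fun x r => ?_
    simp [← mul_assoc, ← TensorProduct.neg_tmul, ← neg_mul,
      eq_neg_of_add_eq_zero_left (ExteriorAlgebra.ι_add_mul_swap (R := ℚ) (Pi.single a 1)
        (Pi.single b 1))]
  D_D a b := by
    refine TensorProduct.ext' fun x r => ?_
    simp [← TensorProduct.neg_tmul,
      CliffordAlgebra.contractLeft_comm (Q := (0 : QuadraticForm ℚ (ι → ℚ)))
        (LinearMap.proj a) (LinearMap.proj b) x]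
  D_theta a b := by
    refine TensorProduct.ext' fun x r => ?_
    have := CliffordAlgebra.contractLeft_ι_mul (Q := (0 : QuadraticForm ℚ (ι → ℚ)))
      (LinearMap.proj a) (Pi.single b 1) x
    simp only [Module.End.mul_apply, creation_tmul, annihilation_tmul,
      LinearMap.sub_apply]
    rw [ExteriorAlgebra.ι, this, TensorProduct.sub_tmul]
    split_ifs with hab
    · simp [hab]
    · simp [hab]
  s_theta a b c := by refine TensorProduct.ext' fun x r => ?_; simp
  s_D a b c := by refine TensorProduct.ext' fun x r => ?_; simp
  s_symm a b := by rw [hsymm]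
  s_s a b c d := by
    rw [← map_mul, hss]
    simp only [map_sub, map_smul, map_mul]
  antisymm := hg

end Fock

section Filtration

variable {M ι : Type*} [AddCommGroup M] [Module ℚ M]

/-- The span of the products of at least `q` creation operators. -/
def creationFiltration (θ : ι → Module.End ℚ M) : ℕ → Submodule ℚ M
  | 0 => ⊤
  | q + 1 => ⨆ a, (creationFiltration θ q).map (θ a)

lemma creation_mem_filtration (θ : ι → Module.End ℚ M) {q : ℕ} {f : M}
    (hf : f ∈ creationFiltration θ q) (a : ι) : θ a f ∈ creationFiltration θ (q + 1) :=
  Submodule.mem_iSup_of_mem (p := fun a => (creationFiltration θ q).map (θ a)) a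
    (Submodule.mem_map_of_mem hf)

lemma creationFiltration_succ_induction {θ : ι → Module.End ℚ M} {q : ℕ}
    {P : Submodule ℚ M} (h : ∀ a, ∀ f ∈ creationFiltration θ q, θ a f ∈ P) :
    creationFiltration θ (q + 1) ≤ P :=
  iSup_le fun a => Submodule.map_le_iff_le_comap.mpr fun f hf => h a f hf

lemma creationFiltration_antitone (θ : ι → Module.End ℚ M) :
    Antitone (creationFiltration θ) := by
  refine antitone_nat_of_succ_le fun q => ?_
  induction q with
  | zero => exact le_top
  | succ q ih =>
    exact creationFiltration_succ_induction fun a f hf => creation_mem_filtration θ (ih hf) a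

lemma prod_creation_mem_filtration (θ : ι → Module.End ℚ M) (l : List ι) (f : M) :
    (l.map θ).prod f ∈ creationFiltration θ l.length := by
  induction l with
  | nil => trivial
  | cons a l ih =>
    rw [List.map_cons, List.prod_cons]
    exact creation_mem_filtration θ ih a

namespace IsSuperspace

variable [Fintype ι] [DecidableEq ι] {g : ι → ι → ℚ} {θ D : ι → Module.End ℚ M}
  {s : ι → ι → Module.End ℚ M} (h : IsSuperspace g θ D s)
include h

omit [Fintype ι] in
lemma D_theta_apply (a b : ι) (f : M) :
    D a (θ b f) = (if a = b then f else 0) - θ b (D a f) := by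
  have := congrArg (fun T : Module.End ℚ M => T f) (h.D_theta a b)
  simp only [Module.End.mul_apply, LinearMap.sub_apply] at this
  rw [this]
  split_ifs <;> simp

omit [Fintype ι] in
lemma D_D_apply (a b : ι) (f : M) : D a (D b f) = - D b (D a f) := by
  have := congrArg (fun T : Module.End ℚ M => T f) (h.D_D a b)
  simpa using this

omit [Fintype ι] in
lemma D_mem_filtration (a : ι) (q : ℕ) {f : M} (hf : f ∈ creationFiltration θ (q + 1)) :
    D a f ∈ creationFiltration θ q := by
  induction q generalizing f with
  | zero => trivial
  | succ q ih =>
    refine creationFiltration_succ_induction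
      (P := (creationFiltration θ (q + 1)).comap (D a)) (fun b f hf => ?_) hf
    rw [Submodule.mem_comap, h.D_theta_apply]
    refine Submodule.sub_mem _ ?_ (creation_mem_filtration θ (ih hf) b)
    split_ifs
    · exact hf
    · exact Submodule.zero_mem _

omit [Fintype ι] in
lemma s_mem_filtration (a b : ι) (q : ℕ) {f : M} (hf : f ∈ creationFiltration θ q) :
    s a b f ∈ creationFiltration θ q := by
  induction q generalizing f with
  | zero => trivial
  | succ q ih =>
    refine creationFiltration_succ_induction
      (P := (creationFiltration θ (q + 1)).comap (s a b)) (fun c f hf => ?_) hf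
    rw [Submodule.mem_comap, ← Module.End.mul_apply, h.s_theta]
    exact creation_mem_filtration θ (ih hf) c

omit h [DecidableEq ι] in
lemma lowered_mem_filtration (a : ι) {q : ℕ} {f : M} (hf : f ∈ creationFiltration θ q) :
    lowered g θ a f ∈ creationFiltration θ (q + 1) := by
  rw [lowered, LinearMap.sum_apply]
  exact Submodule.sum_mem _ fun b _ => Submodule.smul_mem _ _ (creation_mem_filtration θ hf b)

lemma oddField_sub_mem_filtration (a : ι) {q : ℕ} {f : M} (hf : f ∈ creationFiltration θ q) :
    oddField g θ D s a f - D a f ∈ creationFiltration θ (q + 1) := by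
  have h1 : (quadForm g θ * D a) f ∈ creationFiltration θ (q + 1) := by
    rw [quadForm, Finset.sum_mul, LinearMap.sum_apply]
    refine Submodule.sum_mem _ fun b _ => creation_mem_filtration θ ?_ b
    cases q with
    | zero => trivial
    | succ q => exact lowered_mem_filtration b (h.D_mem_filtration a q hf)
  have h2 : euler θ D f ∈ creationFiltration θ q := by
    rw [euler, LinearMap.sum_apply]
    refine Submodule.sum_mem _ fun b _ => ?_
    cases q with
    | zero => trivial
    | succ q => exact creation_mem_filtration θ (h.D_mem_filtration b q hf) b
  have h3 : connection θ s a f ∈ creationFiltration θ (q + 1) := by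
    rw [connection, LinearMap.sum_apply]
    exact Submodule.sum_mem _ fun b _ =>
      creation_mem_filtration θ (h.s_mem_filtration a b q hf) b
  have e : oddField g θ D s a f - D a f = (1 / 4 : ℚ) • (quadForm g θ * D a) f
      - (1 / 2 : ℚ) • lowered g θ a (euler θ D f) + (1 / 2 : ℚ) • connection θ s a f := by
    simp only [oddField, LinearMap.add_apply, LinearMap.sub_apply, LinearMap.smul_apply,
      Module.End.mul_apply]
    abel
  rw [e]
  exact Submodule.add_mem _ (Submodule.sub_mem _ (Submodule.smul_mem _ _ h1)
    (Submodule.smul_mem _ _ (lowered_mem_filtration a h2))) (Submodule.smul_mem _ _ h3)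

omit [Fintype ι] in
lemma prod_D_mem_filtration (l : List ι) {q : ℕ} {f : M}
    (hf : f ∈ creationFiltration θ (q + l.length)) :
    (l.map D).prod f ∈ creationFiltration θ q := by
  induction l generalizing q with
  | nil => exact hf
  | cons a l ih =>
    refine h.D_mem_filtration a q (ih (q := q + 1) ?_)
    rwa [List.length_cons, ← add_assoc, add_right_comm] at hf

/-- A product of odd vector fields acts to leading order as a product of derivatives. -/
lemma prod_oddField_sub_mem_filtration (l : List ι) {q : ℕ} {f : M}
    (hf : f ∈ creationFiltration θ (q + l.length)) :
    (l.map (oddField g θ D s)).prod f - (l.map D).prod f ∈ creationFiltration θ (q + 1) := by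
  induction l generalizing q with
  | nil => simp
  | cons a l ih =>
    have hf' : f ∈ creationFiltration θ (q + 1 + l.length) := by
      rwa [List.length_cons, ← add_assoc, add_right_comm] at hf
    have hD := h.prod_D_mem_filtration l hf'
    have hS := ih hf'
    simp only [List.map_cons, List.prod_cons, Module.End.mul_apply]
    set u := (l.map (oddField g θ D s)).prod f
    set v := (l.map D).prod f
    have e : oddField g θ D s a u - D a v = (oddField g θ D s a (u - v) - D a (u - v))
        + D a (u - v) + (oddField g θ D s a v - D a v) := by
      simp only [map_sub]; abel
    have hle := creationFiltration_antitone θ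
    rw [e]
    exact Submodule.add_mem _ (Submodule.add_mem _
      (hle (by omega) (h.oddField_sub_mem_filtration a hS)) (h.D_mem_filtration a _ hS))
      (hle (by omega) (h.oddField_sub_mem_filtration a hD))

omit [Fintype ι] in
lemma D_prod_theta_eq_zero (a : ι) (l : List ι) (ha : a ∉ l) {v : M} (hv : D a v = 0) :
    D a ((l.map θ).prod v) = 0 := by
  induction l with
  | nil => exact hv
  | cons b l ih =>
    rw [List.mem_cons, not_or] at ha
    rw [List.map_cons, List.prod_cons, Module.End.mul_apply, h.D_theta_apply, if_neg ha.1,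
      ih ha.2, map_zero, sub_zero]

omit [Fintype ι] in
lemma D_prod_D_eq_zero (a : ι) (l : List ι) {v : M} (hv : D a v = 0) :
    D a ((l.map D).prod v) = 0 := by
  induction l with
  | nil => exact hv
  | cons b l ih =>
    rw [List.map_cons, List.prod_cons, Module.End.mul_apply, h.D_D_apply, ih, map_zero, neg_zero]

omit [Fintype ι] in
lemma prod_D_eq_zero (a : ι) (l : List ι) (ha : a ∈ l) {v : M} (hv : D a v = 0) :
    (l.map D).prod v = 0 := by
  induction l with
  | nil => simp at ha
  | cons b l ih =>
    rw [List.map_cons, List.prod_cons, Module.End.mul_apply]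
    rcases List.mem_cons.mp ha with rfl | ha
    · exact h.D_prod_D_eq_zero a l hv
    · rw [ih ha, map_zero]

omit [Fintype ι] in
lemma prod_D_reverse_prod_theta (l : List ι) (hl : l.Nodup) {v : M} (hv : ∀ a, D a v = 0) :
    (l.reverse.map D).prod ((l.map θ).prod v) = v := by
  induction l with
  | nil => rfl
  | cons b l ih =>
    rw [List.nodup_cons] at hl
    rw [List.reverse_cons, List.map_append, List.prod_append, Module.End.mul_apply]
    simp only [List.map_cons, List.map_nil, List.prod_cons, List.prod_nil, mul_one,
      Module.End.mul_apply]
    rw [h.D_theta_apply, if_pos rfl, h.D_prod_theta_eq_zero b l hl.1 (hv b), map_zero, sub_zero,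
      ih hl.2]

end IsSuperspace
end Filtration

section Osp

variable {n : ℕ}

lemma gmat_antisymm (a b : Fin (2 * n)) : gmat n a b = - gmat n b a := by
  unfold gmat
  split_ifs <;> first | omega | norm_num

lemma σσ_mul_σ (a b c : Fin (2 * n)) :
    σσ n a b * σ n c = σ n c * σσ n a b - gmat n a c • σ n b - gmat n b c • σ n a := by
  have := RingQuot.mkAlgHom_rel ℚ (OspRel.rel a b c)
  simp only [map_mul, map_add, map_sub, AlgHom.commutes] at this
  simp only [← Algebra.smul_def] at this
  exact this

lemma σσ_symm (a b : Fin (2 * n)) : σσ n a b = σσ n b a := add_comm _ _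

lemma σσ_mul_σσ (a b c d : Fin (2 * n)) :
    σσ n a b * σσ n c d = σσ n c d * σσ n a b - gmat n a c • σσ n b d - gmat n b c • σσ n a d
      - gmat n a d • σσ n b c - gmat n b d • σσ n a c := by
  have key : ∀ c d, σσ n a b * (σ n c * σ n d) = σ n c * σ n d * σσ n a b
      - gmat n a c • (σ n b * σ n d) - gmat n b c • (σ n a * σ n d)
      - gmat n a d • (σ n c * σ n b) - gmat n b d • (σ n c * σ n a) := fun c d => by
    rw [← mul_assoc, σσ_mul_σ, sub_mul, sub_mul, mul_assoc, σσ_mul_σ]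
    simp only [mul_sub, mul_smul_comm, smul_mul_assoc, mul_assoc]
    abel
  conv_lhs => rw [σσ.eq_1 n c d, mul_add, key, key]
  simp only [σσ.eq_1 n c d, σσ.eq_1 n b d, σσ.eq_1 n a d, σσ.eq_1 n b c, σσ.eq_1 n a c, add_mul,
    smul_add]
  abel

lemma isSuperspace_osp (n : ℕ) : IsSuperspace (gmat n) (creation (U n)) (annihilation (U n))
    (fun a b => coeffMul (U n) (Fin (2 * n)) (σσ n a b)) :=
  isSuperspace_fock gmat_antisymm σσ_symm σσ_mul_σσ

/-- The representation of `U(osp(1|2n))` by vector fields on the coset superspace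
`OSp(1|2n)/Sp(2n)`, with coefficients in `U(osp(1|2n))`. -/
def superfieldRep (n : ℕ) : U n →ₐ[ℚ] Module.End ℚ (Fock (U n) (Fin (2 * n))) :=
  RingQuot.liftAlgHom ℚ ⟨FreeAlgebra.lift ℚ (oddField (gmat n) (creation (U n))
    (annihilation (U n)) fun a b => coeffMul (U n) (Fin (2 * n)) (σσ n a b)), by
      rintro _ _ ⟨a, b, c⟩
      have h := isSuperspace_osp n
      simp only [map_mul, map_add, map_sub, AlgHom.commutes, FreeAlgebra.lift_ι_apply]
      simp only [← Algebra.smul_def]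
      rw [h.oddField_anticomm, h.evenField_oddField]⟩

lemma superfieldRep_σ (a : Fin (2 * n)) : superfieldRep n (σ n a) =
    oddField (gmat n) (creation (U n)) (annihilation (U n))
      (fun a b => coeffMul (U n) (Fin (2 * n)) (σσ n a b)) a := by
  simp [superfieldRep, σ]

lemma constantTerm_superfieldRep_σσ (a b : Fin (2 * n)) (f : Fock (U n) (Fin (2 * n))) :
    constantTerm (U n) _ (superfieldRep n (σσ n a b) f) = σσ n a b * constantTerm (U n) _ f := by
  have hl : ∀ a (f : Fock (U n) (Fin (2 * n))),
      constantTerm (U n) _ (lowered (gmat n) (creation (U n)) a f) = 0 := fun a f => by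
    simp [lowered, LinearMap.sum_apply, constantTerm_creation]
  rw [σσ, map_add, map_mul, map_mul, superfieldRep_σ, superfieldRep_σ,
    (isSuperspace_osp n).oddField_anticomm]
  simp only [evenField, LinearMap.add_apply, Module.End.mul_apply, map_add, hl,
    constantTerm_coeffMul, zero_add]
  rfl

lemma constantTerm_superfieldRep_bos {b : U n} (hb : b ∈ Bos n)
    (f : Fock (U n) (Fin (2 * n))) :
    constantTerm (U n) _ (superfieldRep n b f) = b * constantTerm (U n) _ f := by
  induction hb using Algebra.adjoin_induction generalizing f with
  | mem x hx =>
    obtain ⟨a, b, rfl⟩ := hx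
    exact constantTerm_superfieldRep_σσ a b f
  | algebraMap r => simp [Algebra.algebraMap_eq_smul_one]
  | add x y _ _ hx hy => simp [hx, hy, add_mul]
  | mul x y _ _ hx hy => simp [hx, hy, mul_assoc]

lemma constantTerm_eq_zero {q : ℕ} {f : Fock (U n) (Fin (2 * n))}
    (hf : f ∈ creationFiltration (creation (U n)) (q + 1)) : constantTerm (U n) _ f = 0 :=
  creationFiltration_succ_induction (P := LinearMap.ker (constantTerm (U n) (Fin (2 * n))))
    (fun a f _ => constantTerm_creation a f) hf

lemma constantTerm_superfieldRep_word (l : List (Fin (2 * n))) {f : Fock (U n) (Fin (2 * n))}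
    (hf : f ∈ creationFiltration (creation (U n)) l.length) :
    constantTerm (U n) _ (superfieldRep n (l.map (σ n)).prod f)
      = constantTerm (U n) _ ((l.map (annihilation (U n))).prod f) := by
  have h := (isSuperspace_osp n).prod_oddField_sub_mem_filtration l (q := 0) (f := f)
    (by rwa [zero_add])
  have e := constantTerm_eq_zero h
  rw [map_sub, sub_eq_zero] at e
  rw [map_list_prod, List.map_map, ← e]
  congr 4
  exact funext superfieldRep_σ

lemma prod_annihilation_perm {p : ℕ} (s : Equiv.Perm (Fin p)) (a : Fin p → Fin (2 * n)) :
    (List.ofFn fun i => annihilation (U n) (a (s i))).prod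
      = (Equiv.Perm.sign s : ℤ) • (List.ofFn fun i => annihilation (U n) (a i)).prod := by
  have := prod_ofFn_perm_sub_mem (annihilation (U n)) ⊥ (fun j k x y b c _ _ _ => by
    rw [(isSuperspace_osp n).D_D, neg_add_cancel, mul_zero, zero_mul]; exact zero_mem _) s a
  rwa [Submodule.mem_bot, sub_eq_zero] at this

lemma constantTerm_superfieldRep_brkt {p : ℕ} (a : Fin p → Fin (2 * n))
    {f : Fock (U n) (Fin (2 * n))} (hf : f ∈ creationFiltration (creation (U n)) p) :
    constantTerm (U n) _ (superfieldRep n (brkt n p a) f)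
      = (p ! : ℚ) • constantTerm (U n) _ (((List.ofFn a).map (annihilation (U n))).prod f) := by
  have key : ∀ s : Equiv.Perm (Fin p), (Equiv.Perm.sign s : ℤ) • constantTerm (U n) _
      (superfieldRep n (List.ofFn fun i => σ n (a (s i))).prod f)
      = constantTerm (U n) _ (((List.ofFn a).map (annihilation (U n))).prod f) := fun s => by
    have h := constantTerm_superfieldRep_word (List.ofFn fun i => a (s i)) (f := f)
      (by simpa using hf)
    rw [List.map_ofFn, List.map_ofFn] at h
    simp only [Function.comp_def] at h
    rw [h, prod_annihilation_perm, LinearMap.smul_apply, map_zsmul, smul_smul, ← Units.val_mul,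
      Int.units_mul_self, Units.val_one, one_smul, List.map_ofFn, Function.comp_def]
  simp only [brkt, map_sum, LinearMap.sum_apply, map_zsmul, LinearMap.smul_apply, key]
  simp [Fintype.card_perm, ← Nat.cast_smul_eq_nsmul ℚ]

lemma brkt_perm {p : ℕ} (t : Equiv.Perm (Fin p)) (a : Fin p → Fin (2 * n)) :
    brkt n p (a ∘ t) = (Equiv.Perm.sign t : ℤ) • brkt n p a := by
  simp only [brkt, zsmul_eq_mul]
  rw [Finset.mul_sum, ← Equiv.sum_comp (Equiv.mulLeft t) (fun s : Equiv.Perm (Fin p) =>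
    ((Equiv.Perm.sign t : ℤ) : U n) *
      (((Equiv.Perm.sign s : ℤ) : U n) * (List.ofFn fun i => σ n (a (s i))).prod))]
  refine Finset.sum_congr rfl fun s _ => ?_
  rw [Equiv.coe_mulLeft, Equiv.Perm.sign_mul, ← mul_assoc, ← Int.cast_mul, ← Units.val_mul,
    ← mul_assoc, Int.units_mul_self, one_mul]
  rfl

lemma brkt_eq_zero {p : ℕ} (a : Fin p → Fin (2 * n)) (ha : ¬ Function.Injective a) :
    brkt n p a = 0 := by
  simp only [Function.Injective, not_forall] at ha
  obtain ⟨i, j, hij, hne⟩ := ha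
  have e : a ∘ Equiv.swap i j = a := by
    funext k
    simp only [Function.comp_apply, Equiv.swap_apply_def]
    split_ifs <;> simp_all
  have h := brkt_perm (Equiv.swap i j) a
  rw [e, Equiv.Perm.sign_swap hne, Units.val_neg, Units.val_one, neg_smul, one_smul] at h
  have h2 : (2 : ℚ) • brkt n p a = 0 := by
    rw [two_smul]; nth_rewrite 2 [h]; exact add_neg_cancel _
  simpa using h2

/-- The bracket `[I]` of a set of indices, in increasing order. -/
def orderedBrkt (n : ℕ) (I : Finset (Fin (2 * n))) : Omega n :=
  ⟨brkt n I.card (I.orderEmbOfFin rfl), Submodule.subset_span ⟨_, _, rfl⟩⟩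

lemma coe_orderedBrkt (I : Finset (Fin (2 * n))) {p : ℕ} (hp : I.card = p) :
    (orderedBrkt n I : U n) = brkt n p (I.orderEmbOfFin hp) := by
  subst hp
  rfl

lemma Omega_eq_span : Omega n
    = Submodule.span ℚ (Set.range fun I => (orderedBrkt n I : U n)) := by
  refine le_antisymm (Submodule.span_le.mpr ?_) (Submodule.span_le.mpr ?_)
  · rintro _ ⟨p, a, rfl⟩
    by_cases ha : Function.Injective a
    · have hcard : (Finset.univ.image a).card = p := by
        rw [Finset.card_image_of_injective _ ha, Finset.card_univ, Fintype.card_fin]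
      have hI : brkt n p ((Finset.univ.image a).orderEmbOfFin hcard)
          ∈ Submodule.span ℚ (Set.range fun I => (orderedBrkt n I : U n)) := by
        exact Submodule.subset_span ⟨Finset.univ.image a, coe_orderedBrkt _ hcard⟩
      have hmem : ∀ i, ∃ j, (Finset.univ.image a).orderEmbOfFin hcard j = a i := fun i => by
        have : a i ∈ Set.range ((Finset.univ.image a).orderEmbOfFin hcard) := by
          rw [Finset.range_orderEmbOfFin]; simp
        exact this
      choose t ht using hmem
      have htinj : Function.Injective t := fun i j hij => ha (by rw [← ht i, ← ht j, hij])
      have e : a = (Finset.univ.image a).orderEmbOfFin hcard ∘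
          Equiv.ofBijective t (Finite.injective_iff_bijective.mp htinj) :=
        funext fun i => (ht i).symm
      rw [e, brkt_perm]
      exact Submodule.smul_of_tower_mem _ _ hI
    · rw [brkt_eq_zero a ha]
      exact Submodule.zero_mem _
  · rintro _ ⟨I, rfl⟩
    exact (orderedBrkt n I).2

lemma exists_eq_sum_tmul (t : Bos n ⊗[ℚ] Omega n) :
    ∃ b : Finset (Fin (2 * n)) → Bos n, t = ∑ I, b I ⊗ₜ orderedBrkt n I := by
  induction t using TensorProduct.induction_on with
  | zero => exact ⟨0, by simp⟩
  | tmul b w =>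
    have hw := Omega_eq_span.le w.2
    rw [Submodule.mem_span_range_iff_exists_fun] at hw
    obtain ⟨c, hc⟩ := hw
    refine ⟨fun I => c I • b, ?_⟩
    have : w = ∑ I, c I • orderedBrkt n I := by
      apply Subtype.ext
      rw [← hc]
      simp
    simp only [TensorProduct.smul_tmul, ← TensorProduct.tmul_sum, ← this]
  | add x y hx hy =>
    obtain ⟨b, rfl⟩ := hx
    obtain ⟨c, rfl⟩ := hy
    exact ⟨b + c, by simp [TensorProduct.add_tmul, Finset.sum_add_distrib]⟩

lemma mulMap_tmul (b : Bos n) (w : Omega n) : mulMap n (b ⊗ₜ w) = b * w := rfl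

lemma eq_zero_of_sum_mul_orderedBrkt {b : Finset (Fin (2 * n)) → U n} (hb : ∀ I, b I ∈ Bos n)
    (h0 : ∑ I, b I * (orderedBrkt n I : U n) = 0) (I : Finset (Fin (2 * n))) : b I = 0 := by
  classical
  revert I
  by_contra! hne
  obtain ⟨I₀, hI₀⟩ := hne
  obtain ⟨I, hI, hmax⟩ := (Finset.univ.filter fun I => b I ≠ 0).exists_max_image Finset.card
    ⟨I₀, by simpa using hI₀⟩
  have hsp := isSuperspace_osp n
  set l : List (Fin (2 * n)) := List.ofFn (I.orderEmbOfFin rfl) with hl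
  have hlmem : ∀ J : Finset (Fin (2 * n)), ∀ j,
      j ∈ List.ofFn (J.orderEmbOfFin rfl) ↔ j ∈ J := fun J j => by
    rw [List.mem_ofFn, ← Finset.mem_coe, ← Finset.range_orderEmbOfFin J rfl]
    rfl
  set v : Fock (U n) (Fin (2 * n)) := 1 ⊗ₜ 1 with hv
  have hv0 : ∀ a, annihilation (U n) a v = 0 := fun a => by
    simp [hv, CliffordAlgebra.contractLeft_one]
  set f := (l.reverse.map (creation (U n))).prod v with hf
  have hfmem : f ∈ creationFiltration (creation (U n)) I.card := by
    have := prod_creation_mem_filtration (creation (U n)) l.reverse v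
    rwa [List.length_reverse, hl, List.length_ofFn] at this
  have hpair : (l.map (annihilation (U n))).prod f = v := by
    have := hsp.prod_D_reverse_prod_theta l.reverse
      (List.nodup_reverse.mpr (List.nodup_ofFn.mpr (I.orderEmbOfFin rfl).injective)) hv0
    rwa [List.reverse_reverse] at this
  have hzero : ∀ J, J ≠ I → b J
      * constantTerm (U n) _ (superfieldRep n (orderedBrkt n J : U n) f) = 0 := fun J hJ => by
    by_cases hbJ : b J = 0
    · simp [hbJ]
    have hle : J.card ≤ I.card := hmax J (by simpa using hbJ)
    rw [orderedBrkt, constantTerm_superfieldRep_brkt _ (creationFiltration_antitone _ hle hfmem)]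
    rcases hle.lt_or_eq with hlt | heq
    · rw [constantTerm_eq_zero (q := I.card - J.card - 1), smul_zero, mul_zero]
      refine hsp.prod_D_mem_filtration _ ?_
      rw [List.length_ofFn]
      exact creationFiltration_antitone _ (by omega) hfmem
    · obtain ⟨j, hjJ, hjI⟩ : ∃ j ∈ J, j ∉ I := by
        by_contra! hsub
        exact hJ (Finset.eq_of_subset_of_card_le hsub heq.ge)
      rw [hsp.prod_D_eq_zero j _ ((hlmem J j).mpr hjJ), map_zero, smul_zero, mul_zero]
      refine hsp.D_prod_theta_eq_zero j _ ?_ (hv0 j)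
      rwa [List.mem_reverse, hlmem]
  have hsum : ∑ J, b J
      * constantTerm (U n) _ (superfieldRep n (orderedBrkt n J : U n) f) = 0 := by
    have := congrArg (fun u => constantTerm (U n) _ (superfieldRep n u f)) h0
    simp only [map_sum, map_mul, LinearMap.sum_apply, Module.End.mul_apply, map_zero,
      LinearMap.zero_apply] at this
    rw [← this]
    exact Finset.sum_congr rfl fun J _ => (constantTerm_superfieldRep_bos (hb J) _).symm
  rw [Finset.sum_eq_single I (fun J _ hJ => hzero J hJ) (by simp), orderedBrkt,
    constantTerm_superfieldRep_brkt _ hfmem, ← hl, hpair] at hsum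
  simp only [hv, constantTerm_tmul, map_one, one_smul, mul_smul_comm, mul_one, smul_eq_zero,
    Nat.cast_eq_zero, Nat.factorial_ne_zero, false_or] at hsum
  exact (Finset.mem_filter.mp hI).2 hsum

lemma mulMap_injective (n : ℕ) : Function.Injective (mulMap n) := by
  intro x y hxy
  obtain ⟨b, rfl⟩ := exists_eq_sum_tmul x
  obtain ⟨c, rfl⟩ := exists_eq_sum_tmul y
  simp only [map_sum, mulMap_tmul] at hxy
  refine Finset.sum_congr rfl fun I _ => ?_
  congr 1
  refine Subtype.ext (sub_eq_zero.mp (eq_zero_of_sum_mul_orderedBrkt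
    (b := fun I => (b I : U n) - c I) (fun I => Subalgebra.sub_mem _ (b I).2 (c I).2) ?_ I))
  simp only [sub_mul, Finset.sum_sub_distrib, hxy, sub_self]

lemma mul_mem_range_mulMap {b u : U n} (hb : b ∈ Bos n)
    (hu : u ∈ LinearMap.range (mulMap n)) : b * u ∈ LinearMap.range (mulMap n) := by
  obtain ⟨t, rfl⟩ := hu
  induction t using TensorProduct.induction_on with
  | zero => simp
  | tmul c w => exact ⟨(⟨b, hb⟩ * c) ⊗ₜ w, by simp [mulMap_tmul, mul_assoc]⟩
  | add x y hx hy =>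
    rw [map_add, mul_add]
    exact Submodule.add_mem _ hx hy

lemma mul_σσ_sub_mem (a b : Fin (2 * n)) (j : ℕ) {x : U n}
    (hx : x ∈ Submodule.span ℚ (Set.range (σ n)) ^ j) :
    x * σσ n a b - σσ n a b * x ∈ Submodule.span ℚ (Set.range (σ n)) ^ j := by
  induction j generalizing x with
  | zero =>
    rw [pow_zero, Submodule.mem_one] at hx
    obtain ⟨r, rfl⟩ := hx
    rw [Algebra.commutes, sub_self]
    exact Submodule.zero_mem _
  | succ j ih =>
    rw [_root_.pow_succ'] at hx ⊢
    refine Submodule.mul_induction_on hx (fun v hv x hx => ?_) (fun x y hx hy => ?_)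
    · have hvc : v * σσ n a b - σσ n a b * v ∈ Submodule.span ℚ (Set.range (σ n)) := by
        induction hv using Submodule.span_induction with
        | mem v hv =>
          obtain ⟨c, rfl⟩ := hv
          have e : σ n c * σσ n a b - σσ n a b * σ n c
              = gmat n a c • σ n b + gmat n b c • σ n a := by
            rw [σσ_mul_σ]; abel
          rw [e]
          exact Submodule.add_mem _
            (Submodule.smul_mem _ _ (Submodule.subset_span ⟨b, rfl⟩))
            (Submodule.smul_mem _ _ (Submodule.subset_span ⟨a, rfl⟩))
        | zero => simp
        | add v w _ _ hv hw =>
          rw [add_mul, mul_add, add_sub_add_comm]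
          exact Submodule.add_mem _ hv hw
        | smul r v _ hv =>
          rw [smul_mul_assoc, mul_smul_comm, ← smul_sub]
          exact Submodule.smul_mem _ _ hv
      have e : v * x * σσ n a b - σσ n a b * (v * x)
          = v * (x * σσ n a b - σσ n a b * x) + (v * σσ n a b - σσ n a b * v) * x := by
        simp only [mul_sub, sub_mul, mul_assoc]
        abel
      rw [e]
      exact Submodule.add_mem _ (Submodule.mul_mem_mul hv (ih hx))
        (Submodule.mul_mem_mul hvc hx)
    · rw [add_mul, mul_add, add_sub_add_comm]
      exact Submodule.add_mem _ hx hy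

lemma span_pow_le_range_mulMap (p : ℕ) :
    Submodule.span ℚ (Set.range (σ n)) ^ p ≤ LinearMap.range (mulMap n) := by
  induction p using Nat.strong_induction_on with
  | _ p ih =>
    rw [Submodule.span_pow, Submodule.span_le]
    intro w hw
    obtain ⟨f, rfl⟩ := Set.mem_pow.mp hw
    choose a ha using fun i => (f i).2
    simp only [← ha]
    set P := LinearMap.range (mulMap n)
    have hperm : ∀ s : Equiv.Perm (Fin p), (List.ofFn fun m => σ n (a (s m))).prod
        - (Equiv.Perm.sign s : ℤ) • (List.ofFn fun m => σ n (a m)).prod ∈ P := fun s => by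
      refine prod_ofFn_perm_sub_mem (σ n) P (fun j k x y b c hjk hx hy => ?_) s a
      have e : x * (σ n b * σ n c + σ n c * σ n b) * y
          = (x * σσ n b c - σσ n b c * x) * y + σσ n b c * (x * y) := by
        simp only [σσ, mul_add, add_mul, sub_mul, mul_assoc]
        abel
      have hjk' := ih (j + k) (by omega)
      rw [pow_add] at hjk'
      rw [e]
      exact Submodule.add_mem _
        (hjk' (Submodule.mul_mem_mul (mul_σσ_sub_mem b c j hx) hy))
        (mul_mem_range_mulMap (Algebra.subset_adjoin ⟨b, c, rfl⟩)
          (hjk' (Submodule.mul_mem_mul hx hy)))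
    have hbrkt : brkt n p a ∈ P :=
      ⟨1 ⊗ₜ ⟨brkt n p a, Submodule.subset_span ⟨p, a, rfl⟩⟩, by simp [mulMap_tmul]⟩
    have hdiff : brkt n p a - (p ! : ℚ) • (List.ofFn fun m => σ n (a m)).prod ∈ P := by
      have hsum := Submodule.sum_mem P (t := Finset.univ) fun s _ =>
        P.smul_of_tower_mem (Equiv.Perm.sign s : ℤ) (hperm s)
      convert hsum using 1
      simp only [zsmul_eq_mul, mul_sub, ← mul_assoc, ← Int.cast_mul, ← Units.val_mul,
        Int.units_mul_self, Units.val_one, Int.cast_one, one_mul, Finset.sum_sub_distrib, brkt]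
      simp [Fintype.card_perm, ← Nat.cast_smul_eq_nsmul ℚ]
    have hsmul := Submodule.sub_mem P hbrkt hdiff
    rw [sub_sub_cancel] at hsmul
    exact (P.smul_mem_iff (Nat.cast_ne_zero.mpr p.factorial_ne_zero)).mp hsmul

lemma mulMap_surjective (n : ℕ) : Function.Surjective (mulMap n) := by
  intro u
  obtain ⟨x, rfl⟩ := RingQuot.mkAlgHom_surjective ℚ (OspRel n) u
  have hx : RingQuot.mkAlgHom ℚ (OspRel n) x ∈ Algebra.adjoin ℚ (Set.range (σ n)) := by
    induction x using FreeAlgebra.induction with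
    | grade0 r => rw [AlgHom.commutes]; exact Subalgebra.algebraMap_mem _ r
    | grade1 a => exact Algebra.subset_adjoin ⟨a, rfl⟩
    | mul x y hx hy => rw [map_mul]; exact Subalgebra.mul_mem _ hx hy
    | add x y hx hy => rw [map_add]; exact Subalgebra.add_mem _ hx hy
  rw [← Subalgebra.mem_toSubmodule, Algebra.adjoin_eq_span] at hx
  change _ ∈ LinearMap.range (mulMap n)
  refine (Submodule.span_le (p := LinearMap.range (mulMap n))).mpr (fun y hy => ?_) hx
  obtain ⟨p, hp⟩ : ∃ p, y ∈ Submodule.span ℚ (Set.range (σ n)) ^ p := by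
    induction hy using Submonoid.closure_induction with
    | mem y hy => exact ⟨1, by rw [pow_one]; exact Submodule.subset_span hy⟩
    | one => exact ⟨0, Submodule.mem_one.mpr ⟨1, map_one _⟩⟩
    | mul y z _ _ hy hz =>
      obtain ⟨p, hp⟩ := hy
      obtain ⟨q, hq⟩ := hz
      exact ⟨p + q, by rw [pow_add]; exact Submodule.mul_mem_mul hp hq⟩
  exact span_pow_le_range_mulMap p hp

end Osp

/-- The multiplication map `B ⊗_ℚ Ω → U(osp(1|2n))`, `b ⊗ ω ↦ b·ω`, is a
linear isomorphism of `ℚ`-vector spaces: `U(osp(1|2n)) = U(sp(2n)) ⊗ Ω`. -/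
theorem stmt0 (n : ℕ) (hn : 1 ≤ n) : Function.Bijective (mulMap n) := by
  exact ⟨mulMap_injective n, mulMap_surjective n⟩

end
end

section
/- In the bosonic oscillator realization W_n, for every 0 ≤ k ≤ n the element A^{(n)}_{2k} — the sum, over all k-element subsets {α_1 < ⋯ < α_k} ⊆ {1, …, n}, of the antisymmetrized monomial [α_1, α_1+n, α_2, α_2+n, …, α_k, α_k+n] — equals the scalar 2^{−k} · n!/(n−k)! · 1. -/
open scoped BigOperators
open Nat

noncomputable section

/-- The bosonic oscillator relations `σₐσ_b − σ_bσₐ = −(1/2) g_{ab}`. -/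
inductive WeylRel (n : ℕ) : FreeAlgebra ℚ (Fin (2*n)) → FreeAlgebra ℚ (Fin (2*n)) → Prop
  | rel (a b : Fin (2*n)) : WeylRel n
      (FreeAlgebra.ι ℚ a * FreeAlgebra.ι ℚ b)
      (FreeAlgebra.ι ℚ b * FreeAlgebra.ι ℚ a
        - algebraMap ℚ (FreeAlgebra ℚ (Fin (2*n))) (gmat n a b / 2))

/-- The bosonic oscillator (Weyl) realization `W_n`. -/
abbrev W (n : ℕ) := RingQuot (WeylRel n)

/-- The oscillator generators `σₐ`. -/
def σw (n : ℕ) (a : Fin (2*n)) : W n :=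
  RingQuot.mkAlgHom ℚ (WeylRel n) (FreeAlgebra.ι ℚ a)

/-- The antisymmetrized monomial `[a₁ … a_p]` in `W_n`. -/
def brktW (n : ℕ) (p : ℕ) (a : Fin p → Fin (2*n)) : W n :=
  ∑ s : Equiv.Perm (Fin p),
    (Equiv.Perm.sign s : ℤ) • (List.ofFn fun i => σw n (a (s i))).prod

/-- For a subset `T = {α₁ < … < α_m} ⊆ {1,…,n}`, the tuple
`(α₁, α₁+n, α₂, α₂+n, …, α_m, α_m+n)` (0-indexed). -/
def pairTupleW (n : ℕ) (T : Finset (Fin n)) : Fin (2*T.card) → Fin (2*n) := fun j =>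
  let β : Fin n := T.orderEmbOfFin rfl ⟨(j:ℕ)/2, by have := j.isLt; omega⟩
  if (j:ℕ) % 2 = 0 then ⟨(β:ℕ), by have := β.isLt; omega⟩
  else ⟨(β:ℕ) + n, by have := β.isLt; omega⟩

/-- `A^{(n)}_{2m} ∈ W_n`, the sum over all `m`-element subsets `{α₁ < … < α_m} ⊆ {1,…,n}` of
the antisymmetrized monomials `[α₁, α₁+n, …, α_m, α_m+n]`. -/
def AcalW (n m : ℕ) : W n :=
  ∑ T ∈ Finset.powersetCard m (Finset.univ : Finset (Fin n)),
    brktW n (2*T.card) (pairTupleW n T)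

/-- The antisymmetrized product over the blocks of `Fin k × Fin 2` can be computed by replacing each
block by a commutator. -/
theorem two_pow_smul_sum_perm_prod {R : Type*} [Ring R] {k : ℕ} (x : Fin k × Fin 2 → R) :
    (2 ^ k : ℕ) • ∑ s : Equiv.Perm (Fin k × Fin 2), (Equiv.Perm.sign s : ℤ) •
        (List.ofFn fun i => x (s (i, 0)) * x (s (i, 1))).prod =
      ∑ s : Equiv.Perm (Fin k × Fin 2), (Equiv.Perm.sign s : ℤ) •
        (List.ofFn fun i => x (s (i, 0)) * x (s (i, 1)) - x (s (i, 1)) * x (s (i, 0))).prod := by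
  have hcomm (s : Equiv.Perm (Fin k × Fin 2)) (i : Fin k) :
      x (s (i, 0)) * x (s (i, 1)) - x (s (i, 1)) * x (s (i, 0)) =
        ∑ e : Equiv.Perm (Fin 2), (Equiv.Perm.sign e : ℤ) • (x (s (i, e 0)) * x (s (i, e 1))) := by
    have huniv : (Finset.univ : Finset (Equiv.Perm (Fin 2))) = {1, Equiv.swap 0 1} := by decide
    have hne : (1 : Equiv.Perm (Fin 2)) ≠ Equiv.swap 0 1 := by decide
    rw [huniv, Finset.sum_pair hne]
    simp [sub_eq_add_neg]
  have hexpand (s : Equiv.Perm (Fin k × Fin 2)) :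
      (List.ofFn fun i => x (s (i, 0)) * x (s (i, 1)) - x (s (i, 1)) * x (s (i, 0))).prod =
        ∑ e : Fin k → Equiv.Perm (Fin 2), (∏ i, (Equiv.Perm.sign (e i) : ℤ)) •
          (List.ofFn fun i => x (s (i, e i 0)) * x (s (i, e i 1))).prod := by
    simp_rw [hcomm]
    have h := (MultilinearMap.mkPiAlgebraFin ℤ k R).map_sum (fun i (e : Equiv.Perm (Fin 2)) =>
      (Equiv.Perm.sign e : ℤ) • (x (s (i, e 0)) * x (s (i, e 1))))
    simp_rw [MultilinearMap.map_smul_univ, MultilinearMap.mkPiAlgebraFin_apply] at h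
    exact h
  simp_rw [hexpand, Finset.smul_sum]
  rw [← Finset.smul_sum, Finset.sum_comm]
  have hshift (e : Fin k → Equiv.Perm (Fin 2)) :
      ∑ s : Equiv.Perm (Fin k × Fin 2), (Equiv.Perm.sign s : ℤ) •
        (∏ i, (Equiv.Perm.sign (e i) : ℤ)) •
          (List.ofFn fun i => x (s (i, e i 0)) * x (s (i, e i 1))).prod =
      ∑ s : Equiv.Perm (Fin k × Fin 2), (Equiv.Perm.sign s : ℤ) •
        (List.ofFn fun i => x (s (i, 0)) * x (s (i, 1))).prod := by
    refine Fintype.sum_equiv (Equiv.mulRight (Equiv.prodCongrRight e)) _ _ fun s => ?_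
    simp [Equiv.Perm.sign_mul, Equiv.Perm.sign_prodCongrRight, mul_assoc]
  simp_rw [hshift]
  simp [Fintype.card_perm]

/-- A permutation of `ι × Fin 2` mapping blocks to blocks is a permutation of the blocks after
permutations inside the blocks. -/
theorem exists_eq_prodCongrLeft_mul_prodCongrRight {ι : Type*} [Finite ι]
    (s : Equiv.Perm (ι × Fin 2)) (hs : ∀ i, (s (i, 0)).1 = (s (i, 1)).1) :
    ∃ (t : Equiv.Perm ι) (e : ι → Equiv.Perm (Fin 2)),
      Equiv.prodCongrLeft (fun _ => t) * Equiv.prodCongrRight e = s := by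
  have hfst (i : ι) (a : Fin 2) : (s (i, a)).1 = (s (i, 0)).1 := by
    fin_cases a
    · rfl
    · exact (hs i).symm
  have hsnd (i : ι) : Function.Injective fun a => (s (i, a)).2 := fun a b hab => by
    have : s (i, a) = s (i, b) := Prod.ext ((hfst i a).trans (hfst i b).symm) hab
    simpa using this
  have hbij (i : ι) : Function.Bijective fun a => (s (i, a)).2 :=
    Finite.injective_iff_bijective.1 (hsnd i)
  have hblock : Function.Injective fun i => (s (i, 0)).1 := fun i j hij => by
    obtain ⟨a, ha⟩ := (hbij i).2 (s (j, 0)).2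
    have : s (i, a) = s (j, 0) := Prod.ext ((hfst i a).trans hij) ha
    simpa using congrArg Prod.fst (s.injective this)
  refine ⟨Equiv.ofBijective _ (Finite.injective_iff_bijective.1 hblock),
    fun i => Equiv.ofBijective _ (hbij i), Equiv.ext fun ⟨i, a⟩ => ?_⟩
  exact Prod.ext (hfst i a).symm rfl

/-- The value of the Pfaffian-type sum over permutations at a block-diagonal form. -/
theorem sum_perm_sign_mul_prod_blockDiagonal (k : ℕ) (c : Fin k × Fin 2 → Fin k × Fin 2 → ℚ)
    (r : ℚ) (hne : ∀ p q, p.1 ≠ q.1 → c p q = 0)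
    (h01 : ∀ i, c (i, 0) (i, 1) = r) (h10 : ∀ i, c (i, 1) (i, 0) = -r) :
    ∑ s : Equiv.Perm (Fin k × Fin 2), ((Equiv.Perm.sign s : ℤ) : ℚ) *
      ∏ i, c (s (i, 0)) (s (i, 1)) = k ! * 2 ^ k * r ^ k := by
  have hblock (i : Fin k) (e : Equiv.Perm (Fin 2)) :
      c (i, e 0) (i, e 1) = ((Equiv.Perm.sign e : ℤ) : ℚ) * r := by
    have : e = 1 ∨ e = Equiv.swap 0 1 := by revert e; decide
    rcases this with rfl | rfl <;> simp [h01, h10]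
  let f : Equiv.Perm (Fin k) × (Fin k → Equiv.Perm (Fin 2)) → Equiv.Perm (Fin k × Fin 2) :=
    fun p => Equiv.prodCongrLeft (fun _ => p.1) * Equiv.prodCongrRight p.2
  have hf : Function.Injective f := by
    rintro ⟨t, e⟩ ⟨u, v⟩ h
    have hval (i : Fin k) (a : Fin 2) : t i = u i ∧ e i a = v i a := by
      simpa [f] using congrArg (fun s => s (i, a)) h
    exact Prod.ext (Equiv.ext fun i => (hval i 0).1)
      (funext fun i => Equiv.ext fun a => (hval i a).2)
  rw [← Finset.sum_of_injOn (s := Finset.univ) (f := fun _ => r ^ k) f hf.injOn (by simp)]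
  · simp [Fintype.card_perm]
  · intro s _ hs
    have : ∃ i, (s (i, 0)).1 ≠ (s (i, 1)).1 := by
      by_contra! h
      obtain ⟨t, e, rfl⟩ := exists_eq_prodCongrLeft_mul_prodCongrRight s h
      exact hs ⟨(t, e), by simp, rfl⟩
    obtain ⟨i, hi⟩ := this
    rw [Finset.prod_eq_zero (Finset.mem_univ i) (hne _ _ hi), mul_zero]
  · rintro ⟨t, e⟩ -
    have hsign : ((∏ i, (Equiv.Perm.sign (e i) : ℤ) : ℤ) : ℚ) *
        ∏ i, ((Equiv.Perm.sign (e i) : ℤ) : ℚ) = 1 := by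
      push_cast
      rw [← Finset.prod_mul_distrib]
      refine Finset.prod_eq_one fun i _ => ?_
      rcases Int.units_eq_one_or (Equiv.Perm.sign (e i)) with h | h <;> simp [h]
    simp only [f, Equiv.Perm.sign_mul, Equiv.Perm.sign_prodCongrLeft,
      Equiv.Perm.sign_prodCongrRight, Equiv.Perm.mul_apply, Equiv.prodCongrRight_apply,
      Equiv.prodCongrLeft_apply, hblock, Finset.prod_mul_distrib]
    simp only [Finset.prod_const, Finset.card_univ, Fintype.card_fin, Int.units_sq, one_mul,
      Units.coe_prod, ← mul_assoc]
    rw [hsign, one_mul]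

/-- The antisymmetrized product of `k` canonically conjugate pairs with commutator `r`. -/
theorem sum_perm_sign_smul_prod_of_commutator {R : Type*} [Ring R] [Algebra ℚ R] {k : ℕ}
    (x : Fin k × Fin 2 → R) (c : Fin k × Fin 2 → Fin k × Fin 2 → ℚ) (r : ℚ)
    (hc : ∀ p q, x p * x q - x q * x p = algebraMap ℚ R (c p q))
    (hne : ∀ p q, p.1 ≠ q.1 → c p q = 0)
    (h01 : ∀ i, c (i, 0) (i, 1) = r) (h10 : ∀ i, c (i, 1) (i, 0) = -r) :
    ∑ s : Equiv.Perm (Fin k × Fin 2), (Equiv.Perm.sign s : ℤ) •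
      (List.ofFn fun i => x (s (i, 0)) * x (s (i, 1))).prod =
        algebraMap ℚ R (k ! * r ^ k) := by
  have h := two_pow_smul_sum_perm_prod x
  have hterm (s : Equiv.Perm (Fin k × Fin 2)) : (Equiv.Perm.sign s : ℤ) •
      (List.ofFn fun i => x (s (i, 0)) * x (s (i, 1)) - x (s (i, 1)) * x (s (i, 0))).prod =
      algebraMap ℚ R (((Equiv.Perm.sign s : ℤ) : ℚ) * ∏ i, c (s (i, 0)) (s (i, 1))) := by
    simp_rw [hc]
    rw [← List.prod_ofFn, map_mul, map_list_prod, List.map_ofFn, map_intCast, zsmul_eq_mul]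
    rfl
  simp_rw [hterm] at h
  rw [← map_sum, sum_perm_sign_mul_prod_blockDiagonal k c r hne h01 h10,
    ← Nat.cast_smul_eq_nsmul ℚ] at h
  have h2 : ((2 ^ k : ℕ) : ℚ) ≠ 0 := by positivity
  rw [← inv_smul_smul₀ h2 (Finset.sum _ _), h, Algebra.smul_def, ← map_mul]
  congr 1
  push_cast
  field_simp

theorem σw_commutator (n : ℕ) (a b : Fin (2*n)) :
    σw n a * σw n b - σw n b * σw n a = algebraMap ℚ (W n) (-(gmat n a b / 2)) := by
  have h := RingQuot.mkAlgHom_rel ℚ (WeylRel.rel (n := n) a b)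
  rw [map_sub, map_mul, map_mul, AlgHom.commutes] at h
  rw [σw, σw, h, map_neg]
  abel

/-- The consecutive pairs in `Fin (2 * k)`. -/
def finPairEquiv (k : ℕ) : Fin k × Fin 2 ≃ Fin (2*k) :=
  finProdFinEquiv.trans (finCongr (mul_comm k 2))

theorem finPairEquiv_val (k : ℕ) (p : Fin k × Fin 2) : (finPairEquiv k p : ℕ) = p.2 + 2 * p.1 := rfl

theorem brktW_eq_sum_pairs (n k : ℕ) (a : Fin (2*k) → Fin (2*n)) :
    brktW n (2*k) a = ∑ s : Equiv.Perm (Fin k × Fin 2), (Equiv.Perm.sign s : ℤ) •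
      (List.ofFn fun i => σw n (a (finPairEquiv k (s (i, 0)))) *
        σw n (a (finPairEquiv k (s (i, 1))))).prod := by
  refine (Fintype.sum_equiv (finPairEquiv k).permCongr _ _ fun s => ?_).symm
  rw [Equiv.Perm.sign_permCongr, List.ofFn_mul', List.prod_flatten, List.map_ofFn]
  congr 3
  funext i
  have h0 (h) : (⟨2 * (i : ℕ) + ((0 : Fin 2) : ℕ), h⟩ : Fin (2*k)) = finPairEquiv k (i, 0) :=
    Fin.ext (by simp [finPairEquiv_val])
  have h1 (h) : (⟨2 * (i : ℕ) + ((1 : Fin 2) : ℕ), h⟩ : Fin (2*k)) = finPairEquiv k (i, 1) :=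
    Fin.ext (by simp [finPairEquiv_val, add_comm])
  simp only [Function.comp_apply, List.ofFn_succ, List.ofFn_zero, List.prod_cons, List.prod_nil,
    mul_one, Fin.succ_zero_eq_one, h0, h1, Equiv.permCongr_apply, Equiv.symm_apply_apply]

theorem pairTupleW_finPairEquiv_val (n : ℕ) (T : Finset (Fin n)) (p : Fin T.card × Fin 2) :
    (pairTupleW n T (finPairEquiv T.card p) : ℕ) = T.orderEmbOfFin rfl p.1 + n * p.2 := by
  obtain ⟨i, b⟩ := p
  have hdiv (h) : (⟨(finPairEquiv T.card (i, b) : ℕ) / 2, h⟩ : Fin T.card) = i :=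
    Fin.ext (by simp only [finPairEquiv_val]; omega)
  have hmod : (finPairEquiv T.card (i, b) : ℕ) % 2 = b := by simp only [finPairEquiv_val]; omega
  simp only [pairTupleW, hdiv, hmod]
  fin_cases b <;> simp

theorem brktW_pairTupleW (n : ℕ) (T : Finset (Fin n)) :
    brktW n (2*T.card) (pairTupleW n T) =
      algebraMap ℚ (W n) ((T.card)! * (1/2) ^ T.card) := by
  rw [brktW_eq_sum_pairs]
  have hlt (i : Fin T.card) : (T.orderEmbOfFin rfl i : ℕ) < n := (T.orderEmbOfFin rfl i).isLt
  refine sum_perm_sign_smul_prod_of_commutator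
    (fun p => σw n (pairTupleW n T (finPairEquiv T.card p))) _ (1/2)
    (fun p q => σw_commutator n _ _) ?_ ?_ ?_
  · rintro ⟨i, a⟩ ⟨j, b⟩ hij
    have hne : (T.orderEmbOfFin rfl i : ℕ) ≠ T.orderEmbOfFin rfl j := fun h =>
      hij ((T.orderEmbOfFin rfl).injective (Fin.ext h))
    have hi := hlt i
    have hj := hlt j
    simp only [gmat, pairTupleW_finPairEquiv_val]
    rw [if_neg, if_neg, zero_div, neg_zero] <;> fin_cases a <;> fin_cases b <;> simp <;> omega
  · intro i
    have hi := hlt i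
    simp [gmat, pairTupleW_finPairEquiv_val, hi]
    norm_num
  · intro i
    have hi := hlt i
    have hn : n ≠ 0 := by omega
    simp [gmat, pairTupleW_finPairEquiv_val, hi]

/-- In the bosonic oscillator realization `W_n`, for `0 ≤ k ≤ n` the element
`A^{(n)}_{2k}` equals the scalar `2^{−k} n!/(n−k)!`. -/
theorem stmt14 (n : ℕ) (hn : 1 ≤ n) (k : ℕ) (hk : k ≤ n) :
    AcalW n k = (((1:ℚ)/2^k) * (((n)! : ℚ) / ((n-k))!)) • (1 : W n) := by
  have hterm : ∀ T ∈ Finset.powersetCard k (Finset.univ : Finset (Fin n)),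
      brktW n (2*T.card) (pairTupleW n T) = algebraMap ℚ (W n) (k ! * (1/2) ^ k) := by
    intro T hT
    rw [brktW_pairTupleW, (Finset.mem_powersetCard.1 hT).2]
  rw [AcalW, Finset.sum_congr rfl hterm, Finset.sum_const, Finset.card_powersetCard,
    Finset.card_univ, Fintype.card_fin, ← Algebra.algebraMap_eq_smul_one, ← map_nsmul]
  congr 1
  rw [nsmul_eq_mul, Nat.cast_choose ℚ hk, div_pow, one_pow]
  field_simp

end
end
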